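/- There exists a universal constant C > 0 with the following property. Assume G is connected, let Y_obs ∈ ℝ^n, y_∞ = ‖Y_obs‖_∞, let V_out ⊆ {1,…,n} be nonempty with diagonal 0/1 selection matrix S_out, let μ_min ≤ μ_max be the smallest and largest eigenvalues of B(A), μ = μ_min/μ_max, Y(A) = B(A)^{-1} S̃_in Y_obs, and define the outer objective F_out(A) = ‖S_out (Y(A) − Y_obs)‖². Let i, j be nodes with dist_G(i,v) ≥ k and dist_G(j,v) ≥ k for all v ∈ V_out, and dist_G(i,w) ≥ q and dist_G(j,w) ≥ q for all w ∈ V_tr. Then the derivative of F_out along the symmetric perturbation of the entry pair (A_{ij}, A_{ji}) satisfies |∂F_out/∂A_{ij}| ≤ C λ ((√|V_out| + μ_min √|V_tr| |V_out|) / (μ_min³ |V_tr| m)) y_∞² (1 − μ)^{q+k}. -/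

import Mathlib

/-! STATEMENT 17: there is a universal constant `C > 0` such that the hypergradient of
`F_out (A) = ‖S_out (Y(A) - Y_obs)‖²` along the symmetric perturbation of an edge whose
endpoints are at least `k` hops from `V_out` and `q` hops from `V_tr` is bounded by
`C λ ((√|V_out| + μmin √|V_tr| |V_out|) / (μmin³ |V_tr| m)) y_∞² (1 - μ)^(q+k)`. -/

open scoped BigOperators Matrix

/-- The (weighted) graph Laplacian `L = D - A` with degree matrix `D = diag (A 1ₙ)`. -/
noncomputable def lapMat {n : ℕ} (A : Matrix (Fin n) (Fin n) ℝ) :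
    Matrix (Fin n) (Fin n) ℝ :=
  Matrix.diagonal (fun u => ∑ v, A u v) - A

/-- The diagonal 0/1 selection matrix of a set `V` of nodes. -/
noncomputable def selMat {n : ℕ} (V : Finset (Fin n)) : Matrix (Fin n) (Fin n) ℝ :=
  Matrix.diagonal (fun u => if u ∈ V then 1 else 0)

/-- `S̃_in = S_in / |V_tr|`. -/
noncomputable def Stin {n : ℕ} (Vtr : Finset (Fin n)) : Matrix (Fin n) (Fin n) ℝ :=
  (Vtr.card : ℝ)⁻¹ • selMat Vtr

/-- `B = S̃_in + λ L̃` where `L̃ = L/m`. -/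
noncomputable def Bmat {n : ℕ} (Vtr : Finset (Fin n)) (lam : ℝ) (m : ℕ)
    (A : Matrix (Fin n) (Fin n) ℝ) : Matrix (Fin n) (Fin n) ℝ :=
  Stin Vtr + (lam / m) • lapMat A

/-- Symmetric perturbation of the entry pair `(A i j, A j i)` of `A` to the value `θ`. -/
noncomputable def pert {n : ℕ} (A : Matrix (Fin n) (Fin n) ℝ) (i j : Fin n) (θ : ℝ) :
    Matrix (Fin n) (Fin n) ℝ :=
  Matrix.of fun s t => if (s = i ∧ t = j) ∨ (s = j ∧ t = i) then θ else A s t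

/-!
Perturbing the entry pair `(i, j)` moves `B` along the rank-one matrix `(λ / m) w wᵀ` with
`w = eᵢ - eⱼ`. With `y = B⁻¹ S̃_in Y_obs` and the adjoint state `g = B⁻¹ S_out (y - Y_obs)`, the
derivative of the objective is therefore `-2 (λ / m) (g i - g j) (y i - y j)`.

Both factors are small, because `B⁻¹ b` decays away from the support of `b`. Put `N = 1 - B / μmax`;
then `B⁻¹ - N ^ q B⁻¹ = μmax⁻¹ ∑_{l < q} N ^ l`, and `N ^ l` moves supports by at most `l` hops, so
`B⁻¹ b` and `N ^ q B⁻¹ b` agree at every node at distance at least `q` from the support of `b`.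
Since the spectrum of `B` lies in `[μmin, μmax]`, `N` contracts Euclidean norms by
`1 - μmin / μmax`, while `B⁻¹` expands them by at most `μmin⁻¹`.
-/

section Propagation

variable {V R : Type*} {G : SimpleGraph V} {M : Matrix V V R}

/-- A matrix is local on a graph if its off-diagonal entries are supported on the edges: multiplying
by it moves the support of a vector by at most one hop. Diagonal entries are unrestricted. -/
def IsLocal [Zero R] (G : SimpleGraph V) (M : Matrix V V R) : Prop :=
  ∀ u v, u ≠ v → ¬ G.Adj u v → M u v = 0

lemma IsLocal.edist_le_one [Zero R] (hM : IsLocal G M) {u v : V} (h : M u v ≠ 0) :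
    G.edist u v ≤ 1 := by
  rw [SimpleGraph.edist_le_one_iff_adj_or_eq]
  contrapose! h
  exact hM u v h.2 h.1

lemma IsLocal.one_sub_smul {S : Type*} [Ring R] [SMulZeroClass S R] [DecidableEq V]
    (hM : IsLocal G M) (c : S) : IsLocal G (1 - c • M) := by
  intro u v huv hadj
  rw [Matrix.sub_apply, Matrix.one_apply_ne huv, Matrix.smul_apply, hM u v huv hadj, smul_zero,
    sub_zero]

variable [Fintype V] [DecidableEq V]

lemma IsLocal.pow_apply_eq_zero [Semiring R] (hM : IsLocal G M) {l : ℕ} {u v : V}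
    (h : (l : ℕ∞) < G.edist u v) : (M ^ l) u v = 0 := by
  induction l generalizing v with
  | zero => exact Matrix.one_apply_ne fun huv => by simp [huv] at h
  | succ l ih =>
    rw [pow_succ, Matrix.mul_apply]
    refine Finset.sum_eq_zero fun w _ => ?_
    by_cases hw : M w v = 0
    · rw [hw, mul_zero]
    · have hlt : (l : ℕ∞) + 1 < G.edist u w + 1 := by
        calc (l : ℕ∞) + 1 = ((l + 1 : ℕ) : ℕ∞) := by rw [Nat.cast_succ]
          _ < G.edist u v := h
          _ ≤ G.edist u w + G.edist w v := SimpleGraph.edist_triangle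
          _ ≤ G.edist u w + 1 := by gcongr; exact hM.edist_le_one hw
      rw [ih (lt_of_add_lt_add_right hlt), zero_mul]

lemma IsLocal.pow_mulVec_apply_eq_zero [Semiring R] (hM : IsLocal G M) {l : ℕ} {u : V} {b : V → R}
    (h : ∀ v, b v ≠ 0 → (l : ℕ∞) < G.edist u v) : (M ^ l *ᵥ b) u = 0 := by
  rw [Matrix.mulVec, dotProduct]
  refine Finset.sum_eq_zero fun v _ => ?_
  by_cases hv : b v = 0
  · rw [hv, mul_zero]
  · rw [hM.pow_apply_eq_zero (h v hv), zero_mul]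

lemma inv_sub_one_sub_smul_pow_mul_inv {S : Type*} [CommRing R] [Monoid S] [DistribMulAction S R]
    [IsScalarTower S R R] [SMulCommClass S R R] {B : Matrix V V R} (hB : IsUnit B) (c : S) (q : ℕ) :
    B⁻¹ - (1 - c • B) ^ q * B⁻¹ = c • ∑ l ∈ Finset.range q, (1 - c • B) ^ l := by
  calc B⁻¹ - (1 - c • B) ^ q * B⁻¹
      = (1 - (1 - c • B) ^ q) * B⁻¹ := by rw [sub_mul, one_mul]
    _ = (∑ l ∈ Finset.range q, (1 - c • B) ^ l) * (c • B) * B⁻¹ := by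
      rw [← geom_sum_mul_neg, sub_sub_cancel]
    _ = c • ∑ l ∈ Finset.range q, (1 - c • B) ^ l := by
      rw [mul_assoc, smul_mul_assoc, Matrix.mul_nonsing_inv _ (B.isUnit_iff_isUnit_det.mp hB),
        mul_smul_comm, mul_one]

lemma IsLocal.inv_mulVec_apply_eq {S : Type*} [CommRing R] [Monoid S] [DistribMulAction S R]
    [IsScalarTower S R R] [SMulCommClass S R R] {B : Matrix V V R} (hB : IsLocal G B)
    (hunit : IsUnit B) (c : S) {q : ℕ} {u : V} {b : V → R}
    (h : ∀ v, b v ≠ 0 → (q : ℕ∞) ≤ G.edist u v) :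
    (B⁻¹ *ᵥ b) u = ((1 - c • B) ^ q *ᵥ B⁻¹ *ᵥ b) u := by
  rw [← sub_eq_zero, ← Pi.sub_apply, Matrix.mulVec_mulVec, ← Matrix.sub_mulVec,
    inv_sub_one_sub_smul_pow_mul_inv hunit, Matrix.smul_mulVec, Pi.smul_apply, Matrix.sum_mulVec,
    Finset.sum_apply, Finset.sum_eq_zero, smul_zero]
  intro l hl
  refine (hB.one_sub_smul c).pow_mulVec_apply_eq_zero fun v hv => ?_
  exact (Nat.cast_lt.mpr (Finset.mem_range.mp hl)).trans_le (h v hv)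

end Propagation

section Spectral

variable {V : Type*} [Fintype V]

lemma pos_of_posDef_of_mulVec_eq_smul {B : Matrix V V ℝ} (hB : B.PosDef) {μ : ℝ} {x : V → ℝ}
    (hx : x ≠ 0) (hBx : B *ᵥ x = μ • x) : 0 < μ := by
  have h := hB.dotProduct_mulVec_pos hx
  rw [hBx, dotProduct_smul, smul_eq_mul] at h
  exact pos_of_mul_pos_left h (dotProduct_star_self_nonneg x)

variable [DecidableEq V]

lemma mem_spectrum_iff_exists_mulVec {K : Type*} [Field K] {B : Matrix V V K} {μ : K} :
    μ ∈ spectrum K B ↔ ∃ x, x ≠ 0 ∧ B *ᵥ x = μ • x := by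
  rw [← Matrix.spectrum_toLin', ← Module.End.hasEigenvalue_iff_mem_spectrum]
  refine ⟨fun h => ?_, fun ⟨x, hx, hBx⟩ => ?_⟩
  · obtain ⟨x, hx⟩ := h.exists_hasEigenvector
    exact ⟨x, hx.2, hx.apply_eq_smul⟩
  · exact Module.End.hasEigenvalue_of_hasEigenvector
      ⟨Module.End.mem_eigenspace_iff.mpr hBx, hx⟩

open scoped Matrix.Norms.L2Operator

variable {B : Matrix V V ℝ} {a c : ℝ}

lemma isUnit_of_spectrum_subset_Icc (hspec : spectrum ℝ B ⊆ Set.Icc a c) (ha : 0 < a) : IsUnit B :=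
  (spectrum.zero_notMem_iff ℝ).mp fun h => ha.not_ge (hspec h).1

lemma le_of_spectrum_subset_Icc [Nonempty V] (hB : B.IsHermitian)
    (hspec : spectrum ℝ B ⊆ Set.Icc a c) : a ≤ c :=
  Set.nonempty_Icc.mp ⟨_, hspec (hB.eigenvalues_mem_spectrum_real (Classical.arbitrary V))⟩

lemma one_sub_div_nonneg_of_spectrum_subset_Icc [Nonempty V] (hB : B.IsHermitian)
    (hspec : spectrum ℝ B ⊆ Set.Icc a c) (ha : 0 < a) : 0 ≤ 1 - a / c :=
  have hac : a ≤ c := le_of_spectrum_subset_Icc hB hspec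
  sub_nonneg.mpr ((div_le_one (ha.trans_le hac)).mpr hac)

lemma l2_opNorm_inv_le (hB : B.IsHermitian) (hspec : spectrum ℝ B ⊆ Set.Icc a c) (ha : 0 < a) :
    ‖B⁻¹‖ ≤ a⁻¹ := by
  have hcfc : cfc (fun t : ℝ => t⁻¹) B = B⁻¹ := by
    obtain ⟨U, rfl⟩ := isUnit_of_spectrum_subset_Icc hspec ha
    rw [cfc_inv_id U hB.isSelfAdjoint, Matrix.coe_units_inv]
  rw [← hcfc]
  refine norm_cfc_le (inv_nonneg.mpr ha.le) fun t ht => ?_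
  have hat : a ≤ t := (hspec ht).1
  rw [norm_inv, Real.norm_of_nonneg (ha.le.trans hat)]
  gcongr

lemma l2_opNorm_one_sub_inv_smul_le [Nonempty V] (hB : B.IsHermitian)
    (hspec : spectrum ℝ B ⊆ Set.Icc a c) (ha : 0 < a) : ‖1 - c⁻¹ • B‖ ≤ 1 - a / c := by
  have hc : 0 < c := ha.trans_le (le_of_spectrum_subset_Icc hB hspec)
  have hcfc : cfc (fun t : ℝ => 1 - c⁻¹ * t) B = 1 - c⁻¹ • B := by
    have hsa : IsSelfAdjoint B := hB.isSelfAdjoint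
    rw [cfc_sub (fun _ => 1) (fun t => c⁻¹ * t) B, cfc_const_one ℝ B, cfc_const_mul_id c⁻¹ B]
  rw [← hcfc]
  refine norm_cfc_le (one_sub_div_nonneg_of_spectrum_subset_Icc hB hspec ha) fun t ht => ?_
  obtain ⟨hat, htc⟩ := hspec ht
  rw [← div_eq_inv_mul, Real.norm_of_nonneg (sub_nonneg.mpr ((div_le_one hc).mpr htc))]
  gcongr

lemma norm_toLp_inv_mulVec_le (hB : B.IsHermitian) (hspec : spectrum ℝ B ⊆ Set.Icc a c)
    (ha : 0 < a) (b : V → ℝ) : ‖WithLp.toLp 2 (B⁻¹ *ᵥ b)‖ ≤ a⁻¹ * ‖WithLp.toLp 2 b‖ :=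
  calc ‖WithLp.toLp 2 (B⁻¹ *ᵥ b)‖ ≤ ‖B⁻¹‖ * ‖WithLp.toLp 2 b‖ :=
        Matrix.l2_opNorm_mulVec B⁻¹ (WithLp.toLp 2 b)
    _ ≤ a⁻¹ * ‖WithLp.toLp 2 b‖ := by
        gcongr
        exact l2_opNorm_inv_le hB hspec ha

lemma IsLocal.abs_inv_mulVec_apply_le {G : SimpleGraph V} (hloc : IsLocal G B)
    (hB : B.IsHermitian) (hspec : spectrum ℝ B ⊆ Set.Icc a c) (ha : 0 < a) {q : ℕ} {u : V}
    {b : V → ℝ} (h : ∀ v, b v ≠ 0 → (q : ℕ∞) ≤ G.edist u v) :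
    |(B⁻¹ *ᵥ b) u| ≤ (1 - a / c) ^ q * (a⁻¹ * ‖WithLp.toLp 2 b‖) := by
  have : Nonempty V := ⟨u⟩
  have hN : ‖1 - c⁻¹ • B‖ ≤ 1 - a / c := l2_opNorm_one_sub_inv_smul_le hB hspec ha
  calc |(B⁻¹ *ᵥ b) u| = |((1 - c⁻¹ • B) ^ q *ᵥ B⁻¹ *ᵥ b) u| := by
        rw [hloc.inv_mulVec_apply_eq (isUnit_of_spectrum_subset_Icc hspec ha) c⁻¹ h]
    _ ≤ ‖WithLp.toLp 2 ((1 - c⁻¹ • B) ^ q *ᵥ B⁻¹ *ᵥ b)‖ :=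
        PiLp.norm_apply_le (WithLp.toLp 2 ((1 - c⁻¹ • B) ^ q *ᵥ B⁻¹ *ᵥ b)) u
    _ ≤ ‖(1 - c⁻¹ • B) ^ q‖ * ‖WithLp.toLp 2 (B⁻¹ *ᵥ b)‖ :=
        Matrix.l2_opNorm_mulVec _ (WithLp.toLp 2 (B⁻¹ *ᵥ b))
    _ ≤ (1 - a / c) ^ q * (a⁻¹ * ‖WithLp.toLp 2 b‖) := by
        gcongr
        · exact pow_nonneg ((norm_nonneg _).trans hN) q
        · exact (norm_pow_le _ q).trans (pow_le_pow_left₀ (norm_nonneg _) hN q)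
        · exact norm_toLp_inv_mulVec_le hB hspec ha b

lemma IsLocal.abs_inv_mulVec_apply_sub_le {G : SimpleGraph V} (hloc : IsLocal G B)
    (hB : B.IsHermitian) (hspec : spectrum ℝ B ⊆ Set.Icc a c) (ha : 0 < a) {q : ℕ} {i j : V}
    {b : V → ℝ} (hi : ∀ v, b v ≠ 0 → (q : ℕ∞) ≤ G.edist i v)
    (hj : ∀ v, b v ≠ 0 → (q : ℕ∞) ≤ G.edist j v) :
    |(B⁻¹ *ᵥ b) i - (B⁻¹ *ᵥ b) j| ≤ 2 * ((1 - a / c) ^ q * (a⁻¹ * ‖WithLp.toLp 2 b‖)) := by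
  rw [two_mul]
  exact (abs_sub _ _).trans (add_le_add (hloc.abs_inv_mulVec_apply_le hB hspec ha hi)
    (hloc.abs_inv_mulVec_apply_le hB hspec ha hj))

end Spectral

section Derivative

lemma hasDerivAt_mulVec_const {𝕜 U V : Type*} [NontriviallyNormedField 𝕜] [Finite U] [Fintype V]
    {M : 𝕜 → Matrix U V 𝕜} {M' : Matrix U V 𝕜} {x : 𝕜} (hM : HasDerivAt M M' x) (b : V → 𝕜) :
    HasDerivAt (fun t => M t *ᵥ b) (M' *ᵥ b) x :=
  have := Fintype.ofFinite U
  hasDerivAt_pi.mpr fun u => HasDerivAt.fun_sum fun v _ =>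
    (hasDerivAt_pi.mp (hasDerivAt_pi.mp hM u) v).mul_const (b v)

lemma hasDerivAt_sum_sq {𝕜 V : Type*} [NontriviallyNormedField 𝕜] [Fintype V] {f : 𝕜 → V → 𝕜}
    {f' : V → 𝕜} {x : 𝕜} (hf : HasDerivAt f f' x) :
    HasDerivAt (fun t => ∑ v, f t v ^ 2) (2 * (f x ⬝ᵥ f')) x := by
  rw [dotProduct, Finset.mul_sum]
  refine HasDerivAt.fun_sum fun v _ => ?_
  refine ((hasDerivAt_pi.mp hf v).pow 2).congr_deriv ?_
  ring

variable {𝕜 V : Type*} [RCLike 𝕜] [Fintype V] [DecidableEq V] {M : 𝕜 → Matrix V V 𝕜}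
  {M' : Matrix V V 𝕜} {x : 𝕜}

open scoped Matrix.Norms.L2Operator in
lemma hasDerivAt_matrix_inv (hM : HasDerivAt M M' x) (hx : IsUnit (M x)) :
    HasDerivAt (fun t => (M t)⁻¹) (-((M x)⁻¹ * M' * (M x)⁻¹)) x := by
  obtain ⟨U, hU⟩ := hx
  have hinv := hasFDerivAt_ringInverse (𝕜 := 𝕜) U
  rw [hU] at hinv
  simp only [Matrix.nonsing_inv_eq_ringInverse]
  rw [← hU, Ring.inverse_unit]
  exact hinv.comp_hasDerivAt x hM

lemma hasDerivAt_sum_sq_mulVec_inv_mulVec_sub {U : Type*} [Fintype U] (hM : HasDerivAt M M' x)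
    (hx : IsUnit (M x)) (S : Matrix U V 𝕜) (b Y : V → 𝕜) :
    HasDerivAt (fun t => ∑ u, (S *ᵥ ((M t)⁻¹ *ᵥ b - Y)) u ^ 2)
      (-2 * (((M x)⁻¹ᵀ *ᵥ Sᵀ *ᵥ S *ᵥ ((M x)⁻¹ *ᵥ b - Y)) ⬝ᵥ M' *ᵥ (M x)⁻¹ *ᵥ b)) x := by
  have hstate : HasDerivAt (fun t => (M t)⁻¹ *ᵥ b - Y) (-((M x)⁻¹ *ᵥ M' *ᵥ (M x)⁻¹ *ᵥ b)) x := by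
    have h := (hasDerivAt_mulVec_const (hasDerivAt_matrix_inv hM hx) b).sub_const Y
    rwa [Matrix.neg_mulVec, ← Matrix.mulVec_mulVec, ← Matrix.mulVec_mulVec] at h
  have hresidual := S.mulVecLin.toContinuousLinearMap.hasFDerivAt.comp_hasDerivAt x hstate
  refine (hasDerivAt_sum_sq hresidual).congr_deriv ?_
  simp only [Function.comp_apply, LinearMap.coe_toContinuousLinearMap', Matrix.mulVecLin_apply,
    Matrix.mulVec_neg, dotProduct_neg, Matrix.mulVec_transpose, ← Matrix.dotProduct_mulVec]
  ring

end Derivative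

section Model

variable {n : ℕ} {A : Matrix (Fin n) (Fin n) ℝ} {W : Finset (Fin n)}

lemma lapMat_isSymm (hA : A.IsSymm) : (lapMat A).IsSymm :=
  (Matrix.isSymm_diagonal _).sub hA

lemma lapMat_mulVec_apply (A : Matrix (Fin n) (Fin n) ℝ) (x : Fin n → ℝ) (u : Fin n) :
    (lapMat A *ᵥ x) u = ∑ v, A u v * (x u - x v) := by
  rw [lapMat, Matrix.sub_mulVec, Pi.sub_apply, Matrix.mulVec_diagonal, Matrix.mulVec, dotProduct,
    Finset.sum_mul, ← Finset.sum_sub_distrib]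
  exact Finset.sum_congr rfl fun v _ => (mul_sub ..).symm

lemma two_mul_dotProduct_lapMat_mulVec (hA : A.IsSymm) (x : Fin n → ℝ) :
    2 * (x ⬝ᵥ lapMat A *ᵥ x) = ∑ u, ∑ v, A u v * (x u - x v) ^ 2 := by
  have hform : x ⬝ᵥ lapMat A *ᵥ x = ∑ u, ∑ v, A u v * (x u * (x u - x v)) := by
    simp only [dotProduct, lapMat_mulVec_apply, Finset.mul_sum, mul_left_comm]
  have hswap : x ⬝ᵥ lapMat A *ᵥ x = ∑ u, ∑ v, A u v * (x v * (x v - x u)) := by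
    rw [hform, Finset.sum_comm]
    exact Finset.sum_congr rfl fun u _ => Finset.sum_congr rfl fun v _ => by rw [hA.apply]
  rw [two_mul]
  nth_rewrite 1 [hform]
  simp only [hswap, ← Finset.sum_add_distrib]
  exact Finset.sum_congr rfl fun u _ => Finset.sum_congr rfl fun v _ => by ring

lemma dotProduct_lapMat_mulVec_nonneg (hA : A.IsSymm) (hA0 : ∀ u v, 0 ≤ A u v) (x : Fin n → ℝ) :
    0 ≤ x ⬝ᵥ lapMat A *ᵥ x := by
  have h : 0 ≤ 2 * (x ⬝ᵥ lapMat A *ᵥ x) := by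
    rw [two_mul_dotProduct_lapMat_mulVec hA]
    exact Finset.sum_nonneg fun u _ => Finset.sum_nonneg fun v _ =>
      mul_nonneg (hA0 u v) (sq_nonneg _)
  linarith

lemma eq_of_dotProduct_lapMat_mulVec_eq_zero {G : SimpleGraph (Fin n)} (hA : A.IsSymm)
    (hA0 : ∀ u v, 0 ≤ A u v) (hpos : ∀ u v, G.Adj u v → 0 < A u v) {x : Fin n → ℝ}
    (hx : x ⬝ᵥ lapMat A *ᵥ x = 0) {u v : Fin n} (huv : G.Reachable u v) : x u = x v := by
  have hterm : ∀ u v, 0 ≤ A u v * (x u - x v) ^ 2 := fun u v => mul_nonneg (hA0 u v) (sq_nonneg _)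
  have hsum : ∑ u, ∑ v, A u v * (x u - x v) ^ 2 = 0 := by
    rw [← two_mul_dotProduct_lapMat_mulVec hA, hx, mul_zero]
  have hadj : ∀ u v, G.Adj u v → x u = x v := by
    intro u v huv
    rw [Fintype.sum_eq_zero_iff_of_nonneg fun u => Finset.sum_nonneg fun v _ => hterm u v] at hsum
    have hu := congrFun hsum u
    have huv0 := (Finset.sum_eq_zero_iff_of_nonneg fun v _ => hterm u v).mp hu v (Finset.mem_univ v)
    exact sub_eq_zero.mp (pow_eq_zero_iff two_ne_zero |>.mp
      ((mul_eq_zero.mp huv0).resolve_left (hpos u v huv).ne'))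
  obtain ⟨p⟩ := huv
  induction p with
  | nil => rfl
  | cons h _ ih => exact (hadj _ _ h).trans ih

lemma selMat_isSymm (W : Finset (Fin n)) : (selMat W).IsSymm := Matrix.isSymm_diagonal _

lemma selMat_mulVec_apply (W : Finset (Fin n)) (x : Fin n → ℝ) (u : Fin n) :
    (selMat W *ᵥ x) u = if u ∈ W then x u else 0 := by
  rw [selMat, Matrix.mulVec_diagonal, ite_mul, one_mul, zero_mul]

lemma mem_of_selMat_mulVec_apply_ne_zero {x : Fin n → ℝ} {u : Fin n}
    (h : (selMat W *ᵥ x) u ≠ 0) : u ∈ W := by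
  contrapose! h
  rw [selMat_mulVec_apply, if_neg h]

lemma selMat_mulVec_selMat_mulVec (W : Finset (Fin n)) (x : Fin n → ℝ) :
    selMat W *ᵥ selMat W *ᵥ x = selMat W *ᵥ x := by
  ext u
  rw [selMat_mulVec_apply, ite_eq_left_iff]
  exact fun hu => by rw [selMat_mulVec_apply, if_neg hu]

lemma dotProduct_selMat_mulVec (W : Finset (Fin n)) (x : Fin n → ℝ) :
    x ⬝ᵥ selMat W *ᵥ x = ∑ u ∈ W, x u ^ 2 := by
  simp only [dotProduct, selMat_mulVec_apply, mul_ite, mul_zero, Finset.sum_ite_mem,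
    Finset.univ_inter, sq]

lemma norm_toLp_selMat_mulVec_sq (W : Finset (Fin n)) (x : Fin n → ℝ) :
    ‖WithLp.toLp 2 (selMat W *ᵥ x)‖ ^ 2 = ∑ u ∈ W, x u ^ 2 := by
  simp only [EuclideanSpace.real_norm_sq_eq, selMat_mulVec_apply, ite_pow, zero_pow two_ne_zero,
    Finset.sum_ite_mem, Finset.univ_inter]

lemma norm_toLp_selMat_mulVec_le (W : Finset (Fin n)) (x : Fin n → ℝ) :
    ‖WithLp.toLp 2 (selMat W *ᵥ x)‖ ≤ ‖WithLp.toLp 2 x‖ := by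
  refine le_of_sq_le_sq ?_ (norm_nonneg _)
  rw [norm_toLp_selMat_mulVec_sq, EuclideanSpace.real_norm_sq_eq]
  exact Finset.sum_le_univ_sum_of_nonneg fun u => sq_nonneg (x u)

lemma norm_toLp_selMat_mulVec_le_sqrt_card_mul (W : Finset (Fin n)) (x : Fin n → ℝ) :
    ‖WithLp.toLp 2 (selMat W *ᵥ x)‖ ≤ √W.card * ‖x‖ := by
  rw [← Real.sqrt_sq (norm_nonneg x), ← Real.sqrt_mul (Nat.cast_nonneg _)]
  refine Real.le_sqrt_of_sq_le ?_
  rw [norm_toLp_selMat_mulVec_sq, ← nsmul_eq_mul]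
  refine Finset.sum_le_card_nsmul _ _ _ fun u _ => ?_
  exact sq_le_sq.mpr ((norm_le_pi_norm x u).trans (le_abs_self _))

lemma norm_toLp_Stin_mulVec_le (W : Finset (Fin n)) (x : Fin n → ℝ) :
    ‖WithLp.toLp 2 (Stin W *ᵥ x)‖ ≤ ‖x‖ / √W.card := by
  rw [Stin, Matrix.smul_mulVec, WithLp.toLp_smul, norm_smul, norm_inv, Real.norm_natCast]
  calc (W.card : ℝ)⁻¹ * ‖WithLp.toLp 2 (selMat W *ᵥ x)‖ ≤ (W.card : ℝ)⁻¹ * (√W.card * ‖x‖) := by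
        gcongr
        exact norm_toLp_selMat_mulVec_le_sqrt_card_mul W x
    _ = ‖x‖ / √W.card := by
        rw [← mul_assoc, inv_mul_eq_div, Real.sqrt_div_self, mul_comm, div_eq_mul_inv]

lemma mem_of_Stin_mulVec_apply_ne_zero {x : Fin n → ℝ} {u : Fin n}
    (h : (Stin W *ᵥ x) u ≠ 0) : u ∈ W := by
  rw [Stin, Matrix.smul_mulVec, Pi.smul_apply] at h
  exact mem_of_selMat_mulVec_apply_ne_zero (right_ne_zero_of_smul h)

variable {G : SimpleGraph (Fin n)} {lam : ℝ} {m : ℕ}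

lemma Bmat_isHermitian (W : Finset (Fin n)) (lam : ℝ) (m : ℕ) (hA : A.IsSymm) :
    (Bmat W lam m A).IsHermitian :=
  Matrix.isHermitian_iff_isSymm.mpr
    (((selMat_isSymm W).smul _).add ((lapMat_isSymm hA).smul _))

lemma Bmat_isLocal (W : Finset (Fin n)) (lam : ℝ) (m : ℕ) (hA : IsLocal G A) :
    IsLocal G (Bmat W lam m A) := by
  intro u v huv hadj
  simp only [Bmat, Stin, selMat, lapMat, Matrix.add_apply, Matrix.smul_apply, Matrix.sub_apply,
    Matrix.diagonal_apply_ne _ huv, hA u v huv hadj, sub_zero, smul_zero, add_zero]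

lemma Bmat_posDef (hG : G.Preconnected) (hA : A.IsSymm) (hA0 : ∀ u v, 0 ≤ A u v)
    (hpos : ∀ u v, G.Adj u v → 0 < A u v) (hW : W.Nonempty) (hlam : 0 < lam) (hm : 0 < m) :
    (Bmat W lam m A).PosDef := by
  refine .of_dotProduct_mulVec_pos (Bmat_isHermitian W lam m hA) fun x hx => ?_
  have hform : x ⬝ᵥ Bmat W lam m A *ᵥ x =
      (W.card : ℝ)⁻¹ * ∑ u ∈ W, x u ^ 2 + lam / m * (x ⬝ᵥ lapMat A *ᵥ x) := by
    rw [Bmat, Stin, Matrix.add_mulVec, Matrix.smul_mulVec, Matrix.smul_mulVec, dotProduct_add,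
      dotProduct_smul, dotProduct_smul, dotProduct_selMat_mulVec, smul_eq_mul, smul_eq_mul]
  have hlm : 0 < lam / m := by positivity
  have hlap := dotProduct_lapMat_mulVec_nonneg hA hA0 x
  rw [star_trivial, hform]
  rcases hlap.eq_or_lt with hzero | hlap
  · obtain ⟨w, hw⟩ := hW
    have hconst : ∀ u, x u = x w := fun u =>
      eq_of_dotProduct_lapMat_mulVec_eq_zero hA hA0 hpos hzero.symm (hG u w)
    have hxw : x w ≠ 0 := fun h => hx (funext fun u => (hconst u).trans h)
    have hsum : 0 < ∑ u ∈ W, x u ^ 2 :=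
      Finset.sum_pos (fun u _ => by rw [hconst u]; positivity) ⟨w, hw⟩
    have hcard : 0 < W.card := Finset.card_pos.mpr ⟨w, hw⟩
    positivity
  · positivity

lemma pert_self (hA : A.IsSymm) (i j : Fin n) : pert A i j (A i j) = A := by
  ext u v
  rw [pert, Matrix.of_apply, ite_eq_right_iff]
  rintro (⟨rfl, rfl⟩ | ⟨rfl, rfl⟩)
  · rfl
  · exact hA.apply _ _

lemma pert_apply_mul_sub (hA : A.IsSymm) (i j : Fin n) (θ : ℝ) (x : Fin n → ℝ) (u v : Fin n) :
    pert A i j θ u v * (x u - x v) = A u v * (x u - x v) + (θ - A i j) * (x i - x j) *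
      ((Pi.single i 1 : Fin n → ℝ) u * (Pi.single j 1 : Fin n → ℝ) v -
        (Pi.single j 1 : Fin n → ℝ) u * (Pi.single i 1 : Fin n → ℝ) v) := by
  have hAij : A j i = A i j := hA.apply i j
  simp only [pert, Matrix.of_apply, Pi.single_apply]
  grind

/-- The rank-one Laplacian `(eᵢ - eⱼ)(eᵢ - eⱼ)ᵀ` of a single edge of unit weight, the direction in
which `lapMat` moves under `pert`. It vanishes for `i = j`. -/
def edgeLapMat (i j : Fin n) : Matrix (Fin n) (Fin n) ℝ :=
  Matrix.vecMulVec (Pi.single i 1 - Pi.single j 1) (Pi.single i 1 - Pi.single j 1)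

lemma edgeLapMat_mulVec (i j : Fin n) (x : Fin n → ℝ) :
    edgeLapMat i j *ᵥ x = (x i - x j) • (Pi.single i 1 - Pi.single j 1) := by
  rw [edgeLapMat, Matrix.vecMulVec_mulVec, sub_dotProduct, single_one_dotProduct,
    single_one_dotProduct, op_smul_eq_smul]

lemma dotProduct_edgeLapMat_mulVec (i j : Fin n) (x y : Fin n → ℝ) :
    x ⬝ᵥ edgeLapMat i j *ᵥ y = (x i - x j) * (y i - y j) := by
  rw [edgeLapMat_mulVec, dotProduct_smul, dotProduct_sub, dotProduct_single_one,
    dotProduct_single_one, smul_eq_mul, mul_comm]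

lemma lapMat_pert (hA : A.IsSymm) (i j : Fin n) (θ : ℝ) :
    lapMat (pert A i j θ) = lapMat A + (θ - A i j) • edgeLapMat i j := by
  refine Matrix.mulVec_injective (funext₂ fun x u => ?_)
  simp only [lapMat_mulVec_apply, pert_apply_mul_sub hA, Finset.sum_add_distrib, ← Finset.mul_sum,
    Finset.sum_sub_distrib, Finset.sum_pi_single', Finset.mem_univ, if_true, mul_one,
    Matrix.add_mulVec, Matrix.smul_mulVec, edgeLapMat_mulVec, Pi.add_apply, Pi.smul_apply,
    Pi.sub_apply, smul_eq_mul, mul_assoc]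

open scoped Matrix.Norms.L2Operator in
lemma hasDerivAt_Bmat_pert (hA : A.IsSymm) (W : Finset (Fin n)) (lam : ℝ) (m : ℕ) (i j : Fin n) :
    HasDerivAt (fun θ => Bmat W lam m (pert A i j θ)) ((lam / m) • edgeLapMat i j) (A i j) := by
  have hid : HasDerivAt (fun θ => (θ - A i j) • edgeLapMat i j) (edgeLapMat i j) (A i j) := by
    simpa only [one_smul] using ((hasDerivAt_id' (A i j)).sub_const _).smul_const (edgeLapMat i j)
  simp only [Bmat, lapMat_pert hA]
  exact ((hid.const_add (lapMat A)).const_smul (lam / m)).const_add (Stin W)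

lemma hasDerivAt_objective (hA : A.IsSymm) (Vtr Vout : Finset (Fin n)) (lam : ℝ) (m : ℕ)
    (Y : Fin n → ℝ) (hunit : IsUnit (Bmat Vtr lam m A)) {y g : Fin n → ℝ}
    (hy : y = (Bmat Vtr lam m A)⁻¹ *ᵥ Stin Vtr *ᵥ Y)
    (hg : g = (Bmat Vtr lam m A)⁻¹ *ᵥ selMat Vout *ᵥ (y - Y)) (i j : Fin n) :
    HasDerivAt (fun θ => ∑ a, (selMat Vout *ᵥ
        ((Bmat Vtr lam m (pert A i j θ))⁻¹ *ᵥ Stin Vtr *ᵥ Y - Y)) a ^ 2)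
      (-2 * (lam / m * ((g i - g j) * (y i - y j)))) (A i j) := by
  have hB : (Bmat Vtr lam m A)⁻¹ᵀ = (Bmat Vtr lam m A)⁻¹ :=
    (Matrix.isHermitian_iff_isSymm.mp (Bmat_isHermitian Vtr lam m hA)).inv
  have h := hasDerivAt_sum_sq_mulVec_inv_mulVec_sub (hasDerivAt_Bmat_pert hA Vtr lam m i j)
    (by rwa [pert_self hA]) (selMat Vout) (Stin Vtr *ᵥ Y) Y
  rw [pert_self hA, hB, (selMat_isSymm Vout).eq, selMat_mulVec_selMat_mulVec, ← hy, ← hg] at h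
  refine h.congr_deriv ?_
  rw [Matrix.smul_mulVec, dotProduct_smul, dotProduct_edgeLapMat_mulVec, smul_eq_mul]

end Model

section Damping

variable {n : ℕ} {μmin μmax : ℝ}

lemma norm_toLp_residual_le {B : Matrix (Fin n) (Fin n) ℝ} (hB : B.IsHermitian)
    (hspec : spectrum ℝ B ⊆ Set.Icc μmin μmax) (hμ : 0 < μmin) (Vtr Vout : Finset (Fin n))
    (Y : Fin n → ℝ) :
    ‖WithLp.toLp 2 (selMat Vout *ᵥ (B⁻¹ *ᵥ Stin Vtr *ᵥ Y - Y))‖ ≤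
      μmin⁻¹ * (‖Y‖ / √Vtr.card) + √Vout.card * ‖Y‖ := by
  rw [Matrix.mulVec_sub, WithLp.toLp_sub]
  refine (norm_sub_le _ _).trans (add_le_add ?_ (norm_toLp_selMat_mulVec_le_sqrt_card_mul Vout Y))
  calc ‖WithLp.toLp 2 (selMat Vout *ᵥ B⁻¹ *ᵥ Stin Vtr *ᵥ Y)‖
      ≤ ‖WithLp.toLp 2 (B⁻¹ *ᵥ Stin Vtr *ᵥ Y)‖ := norm_toLp_selMat_mulVec_le Vout _
    _ ≤ μmin⁻¹ * ‖WithLp.toLp 2 (Stin Vtr *ᵥ Y)‖ := norm_toLp_inv_mulVec_le hB hspec hμ _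
    _ ≤ μmin⁻¹ * (‖Y‖ / √Vtr.card) := by
      gcongr
      exact norm_toLp_Stin_mulVec_le Vtr Y

lemma abs_state_sub_le {G : SimpleGraph (Fin n)} {B : Matrix (Fin n) (Fin n) ℝ}
    (hloc : IsLocal G B) (hB : B.IsHermitian) (hspec : spectrum ℝ B ⊆ Set.Icc μmin μmax)
    (hμ : 0 < μmin) {Vtr : Finset (Fin n)} (Y : Fin n → ℝ) {i j : Fin n} {q : ℕ}
    (hi : ∀ w ∈ Vtr, (q : ℕ∞) ≤ G.edist i w) (hj : ∀ w ∈ Vtr, (q : ℕ∞) ≤ G.edist j w) :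
    |(B⁻¹ *ᵥ Stin Vtr *ᵥ Y) i - (B⁻¹ *ᵥ Stin Vtr *ᵥ Y) j| ≤
      2 * ((1 - μmin / μmax) ^ q * (μmin⁻¹ * (‖Y‖ / √Vtr.card))) := by
  have hρ : 0 ≤ 1 - μmin / μmax :=
    have : Nonempty (Fin n) := ⟨i⟩
    one_sub_div_nonneg_of_spectrum_subset_Icc hB hspec hμ
  refine (hloc.abs_inv_mulVec_apply_sub_le hB hspec hμ
    (fun v hv => hi v (mem_of_Stin_mulVec_apply_ne_zero hv))
    (fun v hv => hj v (mem_of_Stin_mulVec_apply_ne_zero hv))).trans ?_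
  gcongr
  exact norm_toLp_Stin_mulVec_le Vtr Y

lemma abs_adjoint_sub_le {G : SimpleGraph (Fin n)} {B : Matrix (Fin n) (Fin n) ℝ}
    (hloc : IsLocal G B) (hB : B.IsHermitian) (hspec : spectrum ℝ B ⊆ Set.Icc μmin μmax)
    (hμ : 0 < μmin) {Vtr Vout : Finset (Fin n)} (Y : Fin n → ℝ) {i j : Fin n} {k : ℕ}
    {g : Fin n → ℝ} (hg : g = B⁻¹ *ᵥ selMat Vout *ᵥ (B⁻¹ *ᵥ Stin Vtr *ᵥ Y - Y))
    (hi : ∀ v ∈ Vout, (k : ℕ∞) ≤ G.edist i v) (hj : ∀ v ∈ Vout, (k : ℕ∞) ≤ G.edist j v) :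
    |g i - g j| ≤ 2 * ((1 - μmin / μmax) ^ k *
      (μmin⁻¹ * (μmin⁻¹ * (‖Y‖ / √Vtr.card) + √Vout.card * ‖Y‖))) := by
  have hρ : 0 ≤ 1 - μmin / μmax :=
    have : Nonempty (Fin n) := ⟨i⟩
    one_sub_div_nonneg_of_spectrum_subset_Icc hB hspec hμ
  rw [hg]
  refine (hloc.abs_inv_mulVec_apply_sub_le hB hspec hμ
    (fun v hv => hi v (mem_of_selMat_mulVec_apply_ne_zero hv))
    (fun v hv => hj v (mem_of_selMat_mulVec_apply_ne_zero hv))).trans ?_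
  gcongr
  exact norm_toLp_residual_le hB hspec hμ Vtr Vout Y

lemma damping_bound_le {lam m t o z ρ : ℝ} (hlam : 0 < lam) (hm : 0 < m) (ht : 0 < t) (ho : 1 ≤ o)
    (hμ : 0 < μmin) (hρ : 0 ≤ ρ) (k q : ℕ) :
    2 * (lam / m * (2 * (ρ ^ k * (μmin⁻¹ * (μmin⁻¹ * (z / t) + o * z))) *
      (2 * (ρ ^ q * (μmin⁻¹ * (z / t)))))) ≤
      8 * lam * ((o + μmin * t * o ^ 2) / (μmin ^ 3 * t ^ 2 * m)) * z ^ 2 * ρ ^ (q + k) := by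
  have ho2 : o ≤ o ^ 2 := le_self_pow₀ ho two_ne_zero
  calc _ = 8 * lam * ((1 + μmin * t * o) / (μmin ^ 3 * t ^ 2 * m)) * z ^ 2 * ρ ^ (q + k) := by
        rw [pow_add]
        field_simp
        ring
    _ ≤ 8 * lam * ((o + μmin * t * o ^ 2) / (μmin ^ 3 * t ^ 2 * m)) * z ^ 2 * ρ ^ (q + k) := by
        gcongr

theorem hypergradient_exponential_damping_general {G : SimpleGraph (Fin n)}
    {A : Matrix (Fin n) (Fin n) ℝ} (hAG : IsLocal G A) (hA : A.IsSymm)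
    {m : ℕ} (hm : 0 < m) {Vtr Vout : Finset (Fin n)} (hVtr : Vtr.Nonempty)
    (hVout : Vout.Nonempty) {lam : ℝ} (hlam : 0 < lam) (Yobs : Fin n → ℝ) (hμ : 0 < μmin)
    (hspec : spectrum ℝ (Bmat Vtr lam m A) ⊆ Set.Icc μmin μmax)
    {i j : Fin n} {k q : ℕ}
    (hik : ∀ v ∈ Vout, (k : ℕ∞) ≤ G.edist i v) (hjk : ∀ v ∈ Vout, (k : ℕ∞) ≤ G.edist j v)
    (hiq : ∀ w ∈ Vtr, (q : ℕ∞) ≤ G.edist i w) (hjq : ∀ w ∈ Vtr, (q : ℕ∞) ≤ G.edist j w) :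
    |deriv (fun θ : ℝ => ∑ a, (selMat Vout *ᵥ
        ((Bmat Vtr lam m (pert A i j θ))⁻¹ *ᵥ Stin Vtr *ᵥ Yobs - Yobs)) a ^ 2)
      (A i j)| ≤
      8 * lam * ((√Vout.card + μmin * √Vtr.card * Vout.card) /
        (μmin ^ 3 * Vtr.card * m)) * ‖Yobs‖ ^ 2 * (1 - μmin / μmax) ^ (q + k) := by
  have : Nonempty (Fin n) := ⟨i⟩
  have hB := Bmat_isHermitian Vtr lam m hA
  have hloc := Bmat_isLocal Vtr lam m hAG
  have hlm : 0 < lam / m := by positivity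
  have hderiv := hasDerivAt_objective hA Vtr Vout lam m Yobs
    (isUnit_of_spectrum_subset_Icc hspec hμ) rfl rfl i j
  rw [hderiv.deriv, abs_mul, abs_mul, abs_mul, abs_of_pos hlm, abs_neg, abs_two]
  have hbound := damping_bound_le (z := ‖Yobs‖) hlam (Nat.cast_pos.mpr hm)
    (Real.sqrt_pos.mpr (Nat.cast_pos.mpr hVtr.card_pos))
    (Real.one_le_sqrt.mpr (Nat.one_le_cast.mpr hVout.card_pos)) hμ
    (one_sub_div_nonneg_of_spectrum_subset_Icc hB hspec hμ) k q
  rw [Real.sq_sqrt (Nat.cast_nonneg _), Real.sq_sqrt (Nat.cast_nonneg _)] at hbound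
  refine le_trans ?_ hbound
  have hadjoint := abs_adjoint_sub_le (Vtr := Vtr) hloc hB hspec hμ Yobs rfl hik hjk
  have hstate := abs_state_sub_le hloc hB hspec hμ Yobs hiq hjq
  gcongr
  exact (abs_nonneg _).trans hadjoint

end Damping

theorem hypergradient_exponential_damping :
    ∃ C : ℝ, 0 < C ∧
      ∀ (n : ℕ) (G : SimpleGraph (Fin n)) (A : Matrix (Fin n) (Fin n) ℝ),
        G.Connected →
        (∀ u v, ¬ G.Adj u v → A u v = 0) →
        (∀ u v, G.Adj u v → 0 < A u v) →
        A.IsSymm →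
        ∀ m : ℕ, m = G.edgeSet.ncard → 0 < m →
        ∀ Vtr Vout : Finset (Fin n), Vtr.Nonempty → Vout.Nonempty →
        ∀ lam : ℝ, 0 < lam →
        ∀ (Yobs : Fin n → ℝ) (μmin μmax : ℝ),
        (∃ x : Fin n → ℝ, x ≠ 0 ∧ (Bmat Vtr lam m A).mulVec x = μmin • x) →
        (∀ (μ : ℝ) (x : Fin n → ℝ), x ≠ 0 →
          (Bmat Vtr lam m A).mulVec x = μ • x → μmin ≤ μ) →
        (∃ x : Fin n → ℝ, x ≠ 0 ∧ (Bmat Vtr lam m A).mulVec x = μmax • x) →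
        (∀ (μ : ℝ) (x : Fin n → ℝ), x ≠ 0 →
          (Bmat Vtr lam m A).mulVec x = μ • x → μ ≤ μmax) →
        ∀ (i j : Fin n) (k q : ℕ),
        (∀ v ∈ Vout, (k : ℕ∞) ≤ G.edist i v) →
        (∀ v ∈ Vout, (k : ℕ∞) ≤ G.edist j v) →
        (∀ w ∈ Vtr, (q : ℕ∞) ≤ G.edist i w) →
        (∀ w ∈ Vtr, (q : ℕ∞) ≤ G.edist j w) →
        |deriv (fun θ : ℝ => ∑ a, (((selMat Vout).mulVec
            ((Bmat Vtr lam m (pert A i j θ))⁻¹.mulVec ((Stin Vtr).mulVec Yobs) - Yobs)) a) ^ 2)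
          (A i j)| ≤
          C * lam * ((Real.sqrt (Vout.card : ℝ) +
              μmin * Real.sqrt (Vtr.card : ℝ) * (Vout.card : ℝ)) /
            (μmin ^ 3 * (Vtr.card : ℝ) * (m : ℝ))) * ‖Yobs‖ ^ 2 *
            (1 - μmin / μmax) ^ (q + k) := by
  refine ⟨8, by norm_num, ?_⟩
  intro n G A hG hA0 hpos hA m _ hm Vtr Vout hVtr hVout lam hlam Yobs μmin μmax ⟨x, hx, hBx⟩ hmin _
    hmax i j k q hik hjk hiq hjq
  have hnonneg : ∀ u v, 0 ≤ A u v := fun u v =>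
    (em (G.Adj u v)).elim (fun h => (hpos u v h).le) (fun h => (hA0 u v h).ge)
  have hμ : 0 < μmin := pos_of_posDef_of_mulVec_eq_smul
    (Bmat_posDef hG.preconnected hA hnonneg hpos hVtr hlam hm) hx hBx
  have hspec : spectrum ℝ (Bmat Vtr lam m A) ⊆ Set.Icc μmin μmax := fun μ hμ =>
    let ⟨x, hx, hBx⟩ := mem_spectrum_iff_exists_mulVec.mp hμ
    ⟨hmin μ x hx hBx, hmax μ x hx hBx⟩
  exact hypergradient_exponential_damping_general (fun u v _ h => hA0 u v h) hA hm hVtr hVout hlam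
    Yobs hμ hspec hik hjk hiq hjq
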